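/- Under the hypotheses of the convergence of geometries theorem ({f_i} C^{1+α} contractions on B_ρ(0) fixing 0, with bounded C^{1+α} norms, derivative norms in (μ′,μ), and bunching κ·μ^α < 1 at every point of the orbit), there exists C > 1 such that for all x, y ∈ B_ρ(0) and all n ≥ 1: C⁻¹ < ‖Df^n(x)‖_op / ‖Df^n(y)‖_op < C, C⁻¹ < m(Df^n(x)) / m(Df^n(y)) < C, and C⁻¹ < det Df^n(x) / det Df^n(y) < C. Moreover these ratios tend to 1 as |x − y| → 0, uniformly in n. -/

import Mathlib

open Metric Set

noncomputable section

variable {d : ℕ}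

/-- `comps f n = f n ∘ ⋯ ∘ f 1` (and `comps f 0 = id`). -/
def comps (f : ℕ → EuclideanSpace ℝ (Fin d) → EuclideanSpace ℝ (Fin d)) :
    ℕ → EuclideanSpace ℝ (Fin d) → EuclideanSpace ℝ (Fin d)
  | 0 => id
  | n + 1 => f (n + 1) ∘ comps f n

/-- The co-norm `m(T) = inf_{‖v‖=1} ‖T v‖` of a continuous linear map. -/
def conorm (T : EuclideanSpace ℝ (Fin d) →L[ℝ] EuclideanSpace ℝ (Fin d)) : ℝ :=
  sInf {r | ∃ v : EuclideanSpace ℝ (Fin d), ‖v‖ = 1 ∧ r = ‖T v‖}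

theorem aux_conorm_le (B : EuclideanSpace ℝ (Fin d) →L[ℝ] EuclideanSpace ℝ (Fin d))
    (G : EuclideanSpace ℝ (Fin d) ≃L[ℝ] EuclideanSpace ℝ (Fin d)) (hd : 0 < d) :
    conorm (B ∘L (G : EuclideanSpace ℝ (Fin d) →L[ℝ] EuclideanSpace ℝ (Fin d))) ≤
      ‖(G : EuclideanSpace ℝ (Fin d) →L[ℝ] EuclideanSpace ℝ (Fin d))‖ * conorm B := by
  have : Nonempty (Fin d) := ⟨⟨0, hd⟩⟩
  obtain ⟨v0, hv0⟩ := exists_norm_eq (EuclideanSpace ℝ (Fin d)) (zero_le_one (α := ℝ))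
  have hG0 : 0 < ‖(G : EuclideanSpace ℝ (Fin d) →L[ℝ] EuclideanSpace ℝ (Fin d))‖ := by
    refine norm_pos_iff.2 fun h => ?_
    have h1 : G v0 = 0 := by
      have := congrArg (fun T : EuclideanSpace ℝ (Fin d) →L[ℝ] EuclideanSpace ℝ (Fin d) => T v0) h
      simpa using this
    have h2 : v0 = 0 := by simpa using h1
    simp [h2] at hv0
  rw [mul_comm, ← div_le_iff₀ hG0]
  refine le_csInf ⟨_, v0, hv0, rfl⟩ ?_
  rintro r ⟨v, hv, rfl⟩
  rw [div_le_iff₀ hG0]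
  set w := G.symm v with hw
  have hGw : G w = v := by simp [hw]
  have hw1 : 1 ≤ ‖(G : EuclideanSpace ℝ (Fin d) →L[ℝ] EuclideanSpace ℝ (Fin d))‖ * ‖w‖ := by
    have := (G : EuclideanSpace ℝ (Fin d) →L[ℝ] EuclideanSpace ℝ (Fin d)).le_opNorm w
    rw [ContinuousLinearEquiv.coe_coe, hGw, hv] at this
    exact this
  have hwpos : 0 < ‖w‖ := by
    by_contra h
    have : ‖w‖ = 0 := le_antisymm (not_lt.1 h) (norm_nonneg _)
    rw [this] at hw1; norm_num at hw1
  have hle : conorm (B ∘L (G : EuclideanSpace ℝ (Fin d) →L[ℝ] EuclideanSpace ℝ (Fin d)))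
      ≤ ‖w‖⁻¹ * ‖B v‖ := by
    refine csInf_le ⟨0, ?_⟩ ⟨‖w‖⁻¹ • w, ?_, ?_⟩
    · rintro r ⟨v, -, rfl⟩; exact norm_nonneg _
    · rw [norm_smul, norm_inv, norm_norm, inv_mul_cancel₀ hwpos.ne']
    · simp [norm_smul, hGw]
  refine hle.trans ?_
  rw [mul_comm]
  refine mul_le_mul_of_nonneg_left ?_ (norm_nonneg _)
  rw [inv_le_iff_one_le_mul₀ hwpos]
  exact hw1

theorem aux_conorm_pos (B : EuclideanSpace ℝ (Fin d) ≃L[ℝ] EuclideanSpace ℝ (Fin d)) (hd : 0 < d) :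
    0 < conorm (B : EuclideanSpace ℝ (Fin d) →L[ℝ] EuclideanSpace ℝ (Fin d)) := by
  have : Nonempty (Fin d) := ⟨⟨0, hd⟩⟩
  obtain ⟨v0, hv0⟩ := exists_norm_eq (EuclideanSpace ℝ (Fin d)) (zero_le_one (α := ℝ))
  have h := aux_conorm_le (B : EuclideanSpace ℝ (Fin d) →L[ℝ] EuclideanSpace ℝ (Fin d)) B.symm hd
  have h1 : (1:ℝ) ≤ conorm ((B : EuclideanSpace ℝ (Fin d) →L[ℝ] EuclideanSpace ℝ (Fin d)) ∘L
      (B.symm : EuclideanSpace ℝ (Fin d) →L[ℝ] EuclideanSpace ℝ (Fin d))) := by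
    refine le_csInf ⟨_, v0, hv0, rfl⟩ ?_
    rintro r ⟨v, hv, rfl⟩
    simp [hv]
  by_contra hn
  have := mul_nonpos_of_nonneg_of_nonpos
    (norm_nonneg (B.symm : EuclideanSpace ℝ (Fin d) →L[ℝ] EuclideanSpace ℝ (Fin d))) (not_lt.1 hn)
  linarith

theorem aux_det_le (G : EuclideanSpace ℝ (Fin d) →L[ℝ] EuclideanSpace ℝ (Fin d)) :
    |LinearMap.det (G : EuclideanSpace ℝ (Fin d) →ₗ[ℝ] EuclideanSpace ℝ (Fin d))| ≤ ‖G‖ ^ d := by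
  have h := MeasureTheory.Measure.addHaar_image_continuousLinearMap MeasureTheory.volume G
    (closedBall (0 : EuclideanSpace ℝ (Fin d)) 1)
  have hsub : G '' closedBall 0 1 ⊆ closedBall 0 ‖G‖ := by
    rintro _ ⟨v, hv, rfl⟩
    rw [mem_closedBall_zero_iff] at hv ⊢
    exact (G.le_opNorm v).trans (mul_le_of_le_one_right (norm_nonneg _) hv)
  have h2 := MeasureTheory.measure_mono (μ := MeasureTheory.volume) hsub
  rw [h, MeasureTheory.Measure.addHaar_closedBall' _ _ (norm_nonneg G)] at h2
  have hpos : MeasureTheory.volume (closedBall (0 : EuclideanSpace ℝ (Fin d)) 1) ≠ 0 :=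
    (measure_closedBall_pos _ _ one_pos).ne'
  have hfin : MeasureTheory.volume (closedBall (0 : EuclideanSpace ℝ (Fin d)) 1) ≠ ⊤ :=
    MeasureTheory.measure_closedBall_lt_top.ne
  rw [ENNReal.mul_le_mul_iff_left hpos hfin, ENNReal.ofReal_le_ofReal_iff (by positivity)] at h2
  simpa using h2

theorem aux_ratio {a b L : ℝ} (ha : 0 < a) (hb : 0 < b) (h1 : a ≤ L * b) (h2 : b ≤ L * a) :
    L⁻¹ ≤ a / b ∧ a / b ≤ L ∧ |a / b - 1| ≤ L - 1 := by
  have hL : 0 < L := by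
    by_contra h
    have := mul_nonpos_of_nonpos_of_nonneg (not_lt.1 h) hb.le
    linarith
  have e1 : L⁻¹ ≤ a / b := by
    rw [inv_le_iff_one_le_mul₀ hL, div_mul_eq_mul_div, le_div_iff₀ hb]; linarith
  have e2 : a / b ≤ L := by rw [div_le_iff₀ hb]; exact h1
  refine ⟨e1, e2, ?_⟩
  have e3 : 2 - L ≤ L⁻¹ := by
    rw [← one_div, le_div_iff₀ hL]; nlinarith [sq_nonneg (L-1)]
  rw [abs_le]; constructor <;> linarith

theorem aux_equiv_norm_pos (hd : 0 < d)
    (B : EuclideanSpace ℝ (Fin d) ≃L[ℝ] EuclideanSpace ℝ (Fin d)) :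
    0 < ‖(B : EuclideanSpace ℝ (Fin d) →L[ℝ] EuclideanSpace ℝ (Fin d))‖ := by
  have : Nonempty (Fin d) := ⟨⟨0, hd⟩⟩
  exact B.norm_pos

/-- **Strong bounded distortion** (Theorem 4.4): under hypotheses (H0)–(H3') (with the
bunching condition at every point of the ball), there is `C > 1` such that for all
`x, y ∈ B_ρ(0)` and all `n ≥ 1` the ratios `‖Df^n(x)‖/‖Df^n(y)‖`, `m(Df^n(x))/m(Df^n(y))`
and `det Df^n(x)/det Df^n(y)` lie in `(C⁻¹, C)`; moreover the ratios tend to `1` as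
`|x − y| → 0`, uniformly in `n`. -/
theorem strong_bounded_distortion
    (hd : 0 < d) (ρ C₀ μ' μ α κ : ℝ) (hρ : 0 < ρ) (hC₀ : 0 < C₀)
    (hμ'0 : 0 < μ') (hμ'μ : μ' < μ) (hμ1 : μ < 1)
    (hα0 : 0 < α) (hα1 : α < 1) (hκ1 : 1 ≤ κ) (hbunch : κ * μ ^ α < 1)
    (f : ℕ → EuclideanSpace ℝ (Fin d) → EuclideanSpace ℝ (Fin d))
    (h0fix : ∀ i, 1 ≤ i → f i 0 = 0)
    (h0inj : ∀ i, 1 ≤ i → InjOn (f i) (ball 0 ρ))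
    (h0diff : ∀ i, 1 ≤ i → ∀ x ∈ ball (0 : EuclideanSpace ℝ (Fin d)) ρ,
      DifferentiableAt ℝ (f i) x)
    (h1 : ∀ i, 1 ≤ i → ∀ x ∈ ball (0 : EuclideanSpace ℝ (Fin d)) ρ,
      ‖f i x‖ + ‖fderiv ℝ (f i) x‖ ≤ C₀)
    (h1Hol : ∀ i, 1 ≤ i → ∀ x ∈ ball (0 : EuclideanSpace ℝ (Fin d)) ρ,
      ∀ y ∈ ball (0 : EuclideanSpace ℝ (Fin d)) ρ,
        ‖fderiv ℝ (f i) x - fderiv ℝ (f i) y‖ ≤ C₀ * ‖x - y‖ ^ α)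
    (h2 : ∀ i, 1 ≤ i → ∀ y ∈ ball (0 : EuclideanSpace ℝ (Fin d)) ρ,
      μ' < ‖fderiv ℝ (f i) y‖ ∧ ‖fderiv ℝ (f i) y‖ < μ)
    (h3 : ∀ i, 1 ≤ i → ∀ x ∈ ball (0 : EuclideanSpace ℝ (Fin d)) ρ,
      ∃ A : EuclideanSpace ℝ (Fin d) ≃L[ℝ] EuclideanSpace ℝ (Fin d),
        fderiv ℝ (f i) x =
          (A : EuclideanSpace ℝ (Fin d) →L[ℝ] EuclideanSpace ℝ (Fin d)) ∧
        ‖(A : EuclideanSpace ℝ (Fin d) →L[ℝ] EuclideanSpace ℝ (Fin d))‖ *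
          ‖(A.symm : EuclideanSpace ℝ (Fin d) →L[ℝ] EuclideanSpace ℝ (Fin d))‖ ≤ κ) :
    ∃ C > (1 : ℝ),
      (∀ x ∈ ball (0 : EuclideanSpace ℝ (Fin d)) ρ,
       ∀ y ∈ ball (0 : EuclideanSpace ℝ (Fin d)) ρ, ∀ n : ℕ, 1 ≤ n →
        (C⁻¹ < ‖fderiv ℝ (comps f n) x‖ / ‖fderiv ℝ (comps f n) y‖ ∧
          ‖fderiv ℝ (comps f n) x‖ / ‖fderiv ℝ (comps f n) y‖ < C) ∧
        (C⁻¹ < conorm (fderiv ℝ (comps f n) x) / conorm (fderiv ℝ (comps f n) y) ∧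
          conorm (fderiv ℝ (comps f n) x) / conorm (fderiv ℝ (comps f n) y) < C) ∧
        (C⁻¹ < LinearMap.det ((fderiv ℝ (comps f n) x :
              EuclideanSpace ℝ (Fin d) →ₗ[ℝ] EuclideanSpace ℝ (Fin d))) /
            LinearMap.det ((fderiv ℝ (comps f n) y :
              EuclideanSpace ℝ (Fin d) →ₗ[ℝ] EuclideanSpace ℝ (Fin d))) ∧
          LinearMap.det ((fderiv ℝ (comps f n) x :
              EuclideanSpace ℝ (Fin d) →ₗ[ℝ] EuclideanSpace ℝ (Fin d))) /
            LinearMap.det ((fderiv ℝ (comps f n) y :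
              EuclideanSpace ℝ (Fin d) →ₗ[ℝ] EuclideanSpace ℝ (Fin d))) < C)) ∧
      (∀ ε > (0 : ℝ), ∃ δ > (0 : ℝ),
        ∀ x ∈ ball (0 : EuclideanSpace ℝ (Fin d)) ρ,
        ∀ y ∈ ball (0 : EuclideanSpace ℝ (Fin d)) ρ, dist x y < δ → ∀ n : ℕ, 1 ≤ n →
          |‖fderiv ℝ (comps f n) x‖ / ‖fderiv ℝ (comps f n) y‖ - 1| ≤ ε ∧
          |conorm (fderiv ℝ (comps f n) x) / conorm (fderiv ℝ (comps f n) y) - 1| ≤ ε ∧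
          |LinearMap.det ((fderiv ℝ (comps f n) x :
              EuclideanSpace ℝ (Fin d) →ₗ[ℝ] EuclideanSpace ℝ (Fin d))) /
            LinearMap.det ((fderiv ℝ (comps f n) y :
              EuclideanSpace ℝ (Fin d) →ₗ[ℝ] EuclideanSpace ℝ (Fin d))) - 1| ≤ ε) := by
  have hμ0 : 0 < μ := hμ'0.trans hμ'μ
  set θ : ℝ := κ * μ ^ α with hθ
  have hθ0 : 0 < θ := by positivity
  -- Lipschitz
  have hlip : ∀ i, 1 ≤ i → ∀ x ∈ ball (0 : EuclideanSpace ℝ (Fin d)) ρ,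
      ∀ y ∈ ball (0 : EuclideanSpace ℝ (Fin d)) ρ, ‖f i x - f i y‖ ≤ μ * ‖x - y‖ := by
    intro i hi x hx y hy
    exact Convex.norm_image_sub_le_of_norm_fderiv_le (𝕜 := ℝ) (h0diff i hi)
      (fun z hz => (h2 i hi z hz).2.le) (convex_ball _ _) hy hx
  have hmap : ∀ i, 1 ≤ i → ∀ x ∈ ball (0 : EuclideanSpace ℝ (Fin d)) ρ, f i x ∈ ball 0 ρ := by
    intro i hi x hx
    have := hlip i hi x hx 0 (mem_ball_self hρ)
    rw [h0fix i hi, sub_zero, sub_zero] at this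
    rw [mem_ball_zero_iff] at hx ⊢
    nlinarith [norm_nonneg x]
  have horb : ∀ n, ∀ x ∈ ball (0 : EuclideanSpace ℝ (Fin d)) ρ, comps f n x ∈ ball 0 ρ := by
    intro n
    induction n with
    | zero => intro x hx; exact hx
    | succ n ih => intro x hx; exact hmap _ (by omega) _ (ih x hx)
  have hclip : ∀ n, ∀ x ∈ ball (0 : EuclideanSpace ℝ (Fin d)) ρ,
      ∀ y ∈ ball (0 : EuclideanSpace ℝ (Fin d)) ρ,
      ‖comps f n x - comps f n y‖ ≤ μ ^ n * ‖x - y‖ := by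
    intro n x hx y hy
    induction n with
    | zero => simp [comps]
    | succ n ih =>
      refine (hlip (n+1) (by omega) _ (horb n x hx) _ (horb n y hy)).trans ?_
      calc μ * ‖comps f n x - comps f n y‖ ≤ μ * (μ ^ n * ‖x - y‖) := by gcongr
        _ = _ := by ring
  have hdiff : ∀ n, ∀ x ∈ ball (0 : EuclideanSpace ℝ (Fin d)) ρ,
      DifferentiableAt ℝ (comps f n) x := by
    intro n x hx
    induction n with
    | zero => exact differentiableAt_id
    | succ n ih => exact (h0diff (n+1) (by omega) _ (horb n x hx)).comp x ih
  have hchain : ∀ n, ∀ x ∈ ball (0 : EuclideanSpace ℝ (Fin d)) ρ,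
      fderiv ℝ (comps f (n+1)) x =
        (fderiv ℝ (f (n+1)) (comps f n x)) ∘L (fderiv ℝ (comps f n) x) := by
    intro n x hx
    exact fderiv_comp x (h0diff (n+1) (by omega) _ (horb n x hx)) (hdiff n x hx)
  have hzero : ∀ x, fderiv ℝ (comps f 0) x =
      ContinuousLinearMap.id ℝ (EuclideanSpace ℝ (Fin d)) := fun x => fderiv_id
  have hinv : ∀ n, ∀ x ∈ ball (0 : EuclideanSpace ℝ (Fin d)) ρ,
      ∃ B : EuclideanSpace ℝ (Fin d) ≃L[ℝ] EuclideanSpace ℝ (Fin d),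
        fderiv ℝ (comps f n) x =
          (B : EuclideanSpace ℝ (Fin d) →L[ℝ] EuclideanSpace ℝ (Fin d)) ∧
        ‖(B : EuclideanSpace ℝ (Fin d) →L[ℝ] EuclideanSpace ℝ (Fin d))‖ *
          ‖(B.symm : EuclideanSpace ℝ (Fin d) →L[ℝ] EuclideanSpace ℝ (Fin d))‖ ≤ κ ^ n := by
    intro n x hx
    induction n with
    | zero =>
      refine ⟨ContinuousLinearEquiv.refl ℝ _, hzero x, ?_⟩
      rw [pow_zero]
      exact mul_le_one₀ ContinuousLinearMap.norm_id_le (norm_nonneg _)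
        ContinuousLinearMap.norm_id_le
    | succ n ih =>
      obtain ⟨B, hB, hBκ⟩ := ih
      obtain ⟨A, hA, hAκ⟩ := h3 (n+1) (by omega) _ (horb n x hx)
      refine ⟨B.trans A, ?_, ?_⟩
      · rw [hchain n x hx, hA, hB]; rfl
      · have e1 := ContinuousLinearMap.opNorm_comp_le
          (A : EuclideanSpace ℝ (Fin d) →L[ℝ] EuclideanSpace ℝ (Fin d))
          (B : EuclideanSpace ℝ (Fin d) →L[ℝ] EuclideanSpace ℝ (Fin d))
        have e2 := ContinuousLinearMap.opNorm_comp_le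
          (B.symm : EuclideanSpace ℝ (Fin d) →L[ℝ] EuclideanSpace ℝ (Fin d))
          (A.symm : EuclideanSpace ℝ (Fin d) →L[ℝ] EuclideanSpace ℝ (Fin d))
        refine (mul_le_mul e1 e2 (norm_nonneg _) (by positivity)).trans ?_
        calc _ = (‖(B : EuclideanSpace ℝ (Fin d) →L[ℝ] EuclideanSpace ℝ (Fin d))‖ *
          ‖(B.symm : EuclideanSpace ℝ (Fin d) →L[ℝ] EuclideanSpace ℝ (Fin d))‖) *
          (‖(A : EuclideanSpace ℝ (Fin d) →L[ℝ] EuclideanSpace ℝ (Fin d))‖ *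
          ‖(A.symm : EuclideanSpace ℝ (Fin d) →L[ℝ] EuclideanSpace ℝ (Fin d))‖) := by ring
          _ ≤ κ ^ n * κ := mul_le_mul hBκ hAκ (by positivity) (by positivity)
          _ = _ := by ring
  set K : ℝ := κ / μ' * C₀ with hK
  have hK0 : 0 < K := by positivity
  have hcore : ∀ n, ∀ x ∈ ball (0 : EuclideanSpace ℝ (Fin d)) ρ,
      ∀ y ∈ ball (0 : EuclideanSpace ℝ (Fin d)) ρ,
      ∃ G : EuclideanSpace ℝ (Fin d) →L[ℝ] EuclideanSpace ℝ (Fin d),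
        fderiv ℝ (comps f n) x = (fderiv ℝ (comps f n) y) ∘L G ∧
        ‖G‖ ≤ Real.exp (K * ‖x - y‖ ^ α * ∑ i ∈ Finset.range n, θ ^ i) := by
    intro n x hx y hy
    induction n with
    | zero =>
      refine ⟨ContinuousLinearMap.id ℝ _, ?_, ?_⟩
      · rw [hzero, hzero]; rfl
      · simpa using ContinuousLinearMap.norm_id_le
    | succ n ih =>
      obtain ⟨G, hG, hGn⟩ := ih
      obtain ⟨B, hB, hBκ⟩ := hinv n y hy
      obtain ⟨b, hb, hbκ⟩ := h3 (n+1) (by omega) _ (horb n y hy)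
      set a := fderiv ℝ (f (n+1)) (comps f n x) with ha
      set b' := (b : EuclideanSpace ℝ (Fin d) →L[ℝ] EuclideanSpace ℝ (Fin d)) with hb'
      set c' := (b.symm : EuclideanSpace ℝ (Fin d) →L[ℝ] EuclideanSpace ℝ (Fin d)) with hc'
      set B' := (B : EuclideanSpace ℝ (Fin d) →L[ℝ] EuclideanSpace ℝ (Fin d)) with hB'
      set D' := (B.symm : EuclideanSpace ℝ (Fin d) →L[ℝ] EuclideanSpace ℝ (Fin d)) with hD'
      have hab : ‖a - b'‖ ≤ C₀ * ((μ ^ α) ^ n * ‖x - y‖ ^ α) := by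
        rw [← hb]
        refine (h1Hol (n+1) (by omega) _ (horb n x hx) _ (horb n y hy)).trans ?_
        gcongr
        calc ‖comps f n x - comps f n y‖ ^ α ≤ (μ ^ n * ‖x - y‖) ^ α :=
              Real.rpow_le_rpow (norm_nonneg _) (hclip n x hx y hy) hα0.le
          _ = _ := by
            rw [Real.mul_rpow (by positivity) (norm_nonneg _), ← Real.rpow_natCast,
              ← Real.rpow_natCast, ← Real.rpow_mul hμ0.le, ← Real.rpow_mul hμ0.le,
              mul_comm (n : ℝ) α]
      have hcn : ‖c'‖ ≤ κ / μ' := by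
        rw [le_div_iff₀ hμ'0]
        have h := (h2 (n+1) (by omega) _ (horb n y hy)).1
        rw [hb] at h
        nlinarith [norm_nonneg c']
      set E' := D' ∘L ((c' ∘L (a - b')) ∘L B') with hE'
      have hEn : ‖E'‖ ≤ K * ‖x - y‖ ^ α * θ ^ n := by
        calc ‖E'‖ ≤ ‖D'‖ * ((‖c'‖ * ‖a - b'‖) * ‖B'‖) := by
              refine (ContinuousLinearMap.opNorm_comp_le _ _).trans ?_
              refine mul_le_mul_of_nonneg_left ?_ (norm_nonneg _)
              refine (ContinuousLinearMap.opNorm_comp_le _ _).trans ?_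
              refine mul_le_mul_of_nonneg_right ?_ (norm_nonneg _)
              exact ContinuousLinearMap.opNorm_comp_le _ _
          _ = (‖B'‖ * ‖D'‖) * (‖c'‖ * ‖a - b'‖) := by ring
          _ ≤ κ ^ n * ((κ / μ') * (C₀ * ((μ ^ α) ^ n * ‖x - y‖ ^ α))) := by
              refine mul_le_mul hBκ (mul_le_mul hcn hab (norm_nonneg _) (by positivity))
                (by positivity) (by positivity)
          _ = K * ‖x - y‖ ^ α * θ ^ n := by rw [hK, hθ, mul_pow]; ring
      refine ⟨(ContinuousLinearMap.id ℝ _ + E') ∘L G, ?_, ?_⟩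
      · rw [hchain n x hx, hchain n y hy, hG, hb, hB]
        ext1 v
        simp [hE', hB', hD', hb', hc', ha]
      · refine (ContinuousLinearMap.opNorm_comp_le _ _).trans ?_
        rw [Finset.sum_range_succ, mul_add, Real.exp_add, mul_comm]
        refine mul_le_mul hGn ?_ (norm_nonneg _) (Real.exp_pos _).le
        calc ‖ContinuousLinearMap.id ℝ _ + E'‖ ≤ 1 + ‖E'‖ :=
              (norm_add_le _ _).trans (add_le_add_left ContinuousLinearMap.norm_id_le _)
          _ ≤ K * ‖x - y‖ ^ α * θ ^ n + 1 := by linarith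
          _ ≤ _ := Real.add_one_le_exp _
  set M : ℝ := K / (1 - θ) with hM
  have h1θ : 0 < 1 - θ := by linarith
  have hM0 : 0 < M := by positivity
  have hcore2 : ∀ n, ∀ x ∈ ball (0 : EuclideanSpace ℝ (Fin d)) ρ,
      ∀ y ∈ ball (0 : EuclideanSpace ℝ (Fin d)) ρ,
      ∃ G : EuclideanSpace ℝ (Fin d) ≃L[ℝ] EuclideanSpace ℝ (Fin d),
        fderiv ℝ (comps f n) x = (fderiv ℝ (comps f n) y) ∘L
          (G : EuclideanSpace ℝ (Fin d) →L[ℝ] EuclideanSpace ℝ (Fin d)) ∧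
        ‖(G : EuclideanSpace ℝ (Fin d) →L[ℝ] EuclideanSpace ℝ (Fin d))‖ ≤
          Real.exp (M * ‖x - y‖ ^ α) := by
    intro n x hx y hy
    obtain ⟨G, hG, hGn⟩ := hcore n x hx y hy
    obtain ⟨A, hA, -⟩ := hinv n x hx
    obtain ⟨B, hB, -⟩ := hinv n y hy
    have hGe : ((A.trans B.symm : EuclideanSpace ℝ (Fin d) ≃L[ℝ] EuclideanSpace ℝ (Fin d)) :
        EuclideanSpace ℝ (Fin d) →L[ℝ] EuclideanSpace ℝ (Fin d)) = G := by
      ext1 v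
      have := congrArg
        (fun T : EuclideanSpace ℝ (Fin d) →L[ℝ] EuclideanSpace ℝ (Fin d) => T v) hG
      rw [hA, hB] at this
      have h' : A v = B (G v) := this
      simp [h']
    refine ⟨A.trans B.symm, by rw [hGe]; exact hG, ?_⟩
    rw [hGe]
    refine hGn.trans (Real.exp_le_exp.2 ?_)
    have hs : ∑ i ∈ Finset.range n, θ ^ i ≤ (1 - θ)⁻¹ := by
      rw [← tsum_geometric_of_lt_one hθ0.le hbunch]
      exact (summable_geometric_of_lt_one hθ0.le hbunch).sum_le_tsum _
        (fun i _ => by positivity)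
    calc _ ≤ K * ‖x - y‖ ^ α * (1 - θ)⁻¹ := by gcongr
      _ = _ := by rw [hM]; ring
  -- sign of determinants
  have hsign1 : ∀ i, 1 ≤ i → ∀ x ∈ ball (0 : EuclideanSpace ℝ (Fin d)) ρ,
      ∀ y ∈ ball (0 : EuclideanSpace ℝ (Fin d)) ρ,
      0 < (fderiv ℝ (f i) x).det * (fderiv ℝ (f i) y).det := by
    intro i hi x hx y hy
    have hne : ∀ z ∈ ball (0 : EuclideanSpace ℝ (Fin d)) ρ, (fderiv ℝ (f i) z).det ≠ 0 := by
      intro z hz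
      obtain ⟨A, hA, -⟩ := h3 i hi z hz
      rw [hA]
      exact A.toLinearEquiv.isUnit_det'.ne_zero
    have hcont : ContinuousOn (fun z => (fderiv ℝ (f i) z).det)
        (ball (0 : EuclideanSpace ℝ (Fin d)) ρ) := by
      refine ContinuousLinearMap.continuous_det.comp_continuousOn ?_
      intro z hz
      rw [ContinuousWithinAt, tendsto_iff_norm_sub_tendsto_zero]
      have hlim : Filter.Tendsto (fun w => C₀ * ‖w - z‖ ^ α)
          (nhdsWithin z (ball (0 : EuclideanSpace ℝ (Fin d)) ρ)) (nhds 0) := by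
        have hc : Continuous (fun w : EuclideanSpace ℝ (Fin d) => C₀ * ‖w - z‖ ^ α) :=
          continuous_const.mul ((continuous_id.sub continuous_const).norm.rpow_const
            (fun _ => Or.inr hα0.le))
        have := hc.continuousWithinAt (s := ball 0 ρ) (x := z)
        rw [ContinuousWithinAt] at this
        simpa [Real.zero_rpow hα0.ne'] using this
      refine squeeze_zero' (Filter.Eventually.of_forall fun _ => norm_nonneg _) ?_ hlim
      filter_upwards [self_mem_nhdsWithin] with w hw
      exact h1Hol i hi w hw z hz
    have hpre := ((convex_ball (0 : EuclideanSpace ℝ (Fin d)) ρ).isPreconnected.image _ hcont)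
    have hoc := hpre.ordConnected
    by_contra hneg
    have hx0 := hne x hx
    have hy0 := hne y hy
    have h0 : (0:ℝ) ∈ (fun z => (fderiv ℝ (f i) z).det) ''
        (ball (0 : EuclideanSpace ℝ (Fin d)) ρ) := by
      rcases mul_nonpos_iff.1 (not_lt.1 hneg) with h | h
      · exact hoc.out ⟨y, hy, rfl⟩ ⟨x, hx, rfl⟩ ⟨h.2, h.1⟩
      · exact hoc.out ⟨x, hx, rfl⟩ ⟨y, hy, rfl⟩ ⟨h.1, h.2⟩
    obtain ⟨z, hz, hz0⟩ := h0
    exact hne z hz hz0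
  have hsign : ∀ n, ∀ x ∈ ball (0 : EuclideanSpace ℝ (Fin d)) ρ,
      ∀ y ∈ ball (0 : EuclideanSpace ℝ (Fin d)) ρ,
      0 < (fderiv ℝ (comps f n) x).det * (fderiv ℝ (comps f n) y).det := by
    intro n x hx y hy
    induction n with
    | zero =>
      rw [hzero, hzero]
      simp [ContinuousLinearMap.det]
    | succ n ih =>
      have e : ∀ P Q : EuclideanSpace ℝ (Fin d) →L[ℝ] EuclideanSpace ℝ (Fin d),
          (P ∘L Q).det = P.det * Q.det := by
        intro P Q
        simp [ContinuousLinearMap.det, LinearMap.det_comp]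
      rw [hchain n x hx, hchain n y hy, e, e]
      have := mul_pos (hsign1 (n+1) (by omega) _ (horb n x hx) _ (horb n y hy)) ih
      linarith
  -- one-sided comparison
  have hd1 : (1:ℝ) ≤ d := by exact_mod_cast hd
  have hexp : ∀ t : ℝ, 0 ≤ t → Real.exp (M * t) ≤ Real.exp (d * (M * t)) := by
    intro t ht
    refine Real.exp_le_exp.2 ?_
    have : 0 ≤ M * t := by positivity
    nlinarith
  have hone : ∀ n, ∀ x ∈ ball (0 : EuclideanSpace ℝ (Fin d)) ρ,
      ∀ y ∈ ball (0 : EuclideanSpace ℝ (Fin d)) ρ,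
      ‖fderiv ℝ (comps f n) x‖ ≤
        Real.exp (d * (M * ‖x - y‖ ^ α)) * ‖fderiv ℝ (comps f n) y‖ ∧
      conorm (fderiv ℝ (comps f n) x) ≤
        Real.exp (d * (M * ‖x - y‖ ^ α)) * conorm (fderiv ℝ (comps f n) y) ∧
      |(fderiv ℝ (comps f n) x).det| ≤
        Real.exp (d * (M * ‖x - y‖ ^ α)) * |(fderiv ℝ (comps f n) y).det| := by
    intro n x hx y hy
    obtain ⟨G, hG, hGn⟩ := hcore2 n x hx y hy
    obtain ⟨B, hB, -⟩ := hinv n y hy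
    have hGd := hGn.trans (hexp (‖x - y‖ ^ α) (by positivity))
    refine ⟨?_, ?_, ?_⟩
    · rw [hG, mul_comm]
      exact (ContinuousLinearMap.opNorm_comp_le _ _).trans
        (mul_le_mul_of_nonneg_left hGd (norm_nonneg _))
    · rw [hG]
      refine (aux_conorm_le _ G hd).trans (mul_le_mul_of_nonneg_right hGd ?_)
      rw [hB]
      exact (aux_conorm_pos B hd).le
    · have e : (fderiv ℝ (comps f n) x).det = (fderiv ℝ (comps f n) y).det *
          (G : EuclideanSpace ℝ (Fin d) →L[ℝ] EuclideanSpace ℝ (Fin d)).det := by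
        rw [hG]
        simp [ContinuousLinearMap.det, LinearMap.det_comp]
      rw [e, abs_mul, mul_comm]
      refine mul_le_mul_of_nonneg_right ?_ (abs_nonneg _)
      refine (aux_det_le _).trans ?_
      rw [Real.exp_nat_mul]
      exact pow_le_pow_left₀ (norm_nonneg _) hGn _
  have hratio : ∀ n, ∀ x ∈ ball (0 : EuclideanSpace ℝ (Fin d)) ρ,
      ∀ y ∈ ball (0 : EuclideanSpace ℝ (Fin d)) ρ, ∀ L : ℝ,
      L = Real.exp (d * (M * ‖x - y‖ ^ α)) →
      (L⁻¹ ≤ ‖fderiv ℝ (comps f n) x‖ / ‖fderiv ℝ (comps f n) y‖ ∧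
        ‖fderiv ℝ (comps f n) x‖ / ‖fderiv ℝ (comps f n) y‖ ≤ L ∧
        |‖fderiv ℝ (comps f n) x‖ / ‖fderiv ℝ (comps f n) y‖ - 1| ≤ L - 1) ∧
      (L⁻¹ ≤ conorm (fderiv ℝ (comps f n) x) / conorm (fderiv ℝ (comps f n) y) ∧
        conorm (fderiv ℝ (comps f n) x) / conorm (fderiv ℝ (comps f n) y) ≤ L ∧
        |conorm (fderiv ℝ (comps f n) x) / conorm (fderiv ℝ (comps f n) y) - 1| ≤ L - 1) ∧
      (L⁻¹ ≤ (fderiv ℝ (comps f n) x).det / (fderiv ℝ (comps f n) y).det ∧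
        (fderiv ℝ (comps f n) x).det / (fderiv ℝ (comps f n) y).det ≤ L ∧
        |(fderiv ℝ (comps f n) x).det / (fderiv ℝ (comps f n) y).det - 1| ≤ L - 1) := by
    intro n x hx y hy L hL
    obtain ⟨p1, p2, p3⟩ := hone n x hx y hy
    obtain ⟨q1, q2, q3⟩ := hone n y hy x hx
    rw [norm_sub_rev y x] at q1 q2 q3
    rw [← hL] at p1 p2 p3 q1 q2 q3
    obtain ⟨A, hA, -⟩ := hinv n x hx
    obtain ⟨B, hB, -⟩ := hinv n y hy
    refine ⟨aux_ratio ?_ ?_ p1 q1, aux_ratio ?_ ?_ p2 q2, ?_⟩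
    · rw [hA]; exact aux_equiv_norm_pos hd A
    · rw [hB]; exact aux_equiv_norm_pos hd B
    · rw [hA]; exact aux_conorm_pos A hd
    · rw [hB]; exact aux_conorm_pos B hd
    · have hs := hsign n x hx y hy
      have hx0 : (fderiv ℝ (comps f n) x).det ≠ 0 := left_ne_zero_of_mul hs.ne'
      have hy0 : (fderiv ℝ (comps f n) y).det ≠ 0 := right_ne_zero_of_mul hs.ne'
      have e : (fderiv ℝ (comps f n) x).det / (fderiv ℝ (comps f n) y).det =
          |(fderiv ℝ (comps f n) x).det| / |(fderiv ℝ (comps f n) y).det| := by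
        rw [← abs_div, abs_of_pos]
        rcases mul_pos_iff.1 hs with h | h
        · exact div_pos h.1 h.2
        · exact div_pos_of_neg_of_neg h.1 h.2
      rw [e]
      exact aux_ratio (abs_pos.2 hx0) (abs_pos.2 hy0) p3 q3
  refine ⟨Real.exp (d * (M * (2 * ρ) ^ α)) + 1, by linarith [Real.exp_pos (d * (M * (2 * ρ) ^ α))],
    ?_, ?_⟩
  · intro x hx y hy n _
    have hxy : ‖x - y‖ ≤ 2 * ρ := by
      rw [mem_ball_zero_iff] at hx hy
      linarith [norm_sub_le x y]
    have hL : Real.exp (d * (M * ‖x - y‖ ^ α)) < Real.exp (d * (M * (2 * ρ) ^ α)) + 1 := by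
      have : Real.exp (d * (M * ‖x - y‖ ^ α)) ≤ Real.exp (d * (M * (2 * ρ) ^ α)) := by
        gcongr
      linarith
    have hLi := inv_strictAnti₀ (Real.exp_pos _) hL
    obtain ⟨⟨a1, a2, -⟩, ⟨b1, b2, -⟩, ⟨c1, c2, -⟩⟩ := hratio n x hx y hy _ rfl
    exact ⟨⟨hLi.trans_le a1, a2.trans_lt hL⟩, ⟨hLi.trans_le b1, b2.trans_lt hL⟩,
      ⟨hLi.trans_le c1, c2.trans_lt hL⟩⟩
  · intro ε hε
    have hc : Continuous (fun t : ℝ => Real.exp (d * (M * t ^ α))) :=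
      Real.continuous_exp.comp (continuous_const.mul (continuous_const.mul
        (continuous_id.rpow_const (fun _ => Or.inr hα0.le))))
    obtain ⟨δ, hδ, hδε⟩ := Metric.continuous_iff.1 hc 0 ε hε
    refine ⟨δ, hδ, ?_⟩
    intro x hx y hy hxy n _
    have hb := hδε ‖x - y‖ (by simpa [← dist_eq_norm] using hxy)
    rw [Real.zero_rpow hα0.ne', mul_zero, mul_zero, Real.exp_zero, Real.dist_eq] at hb
    have hb' := (le_abs_self _).trans hb.le
    obtain ⟨⟨-, -, a⟩, ⟨-, -, b⟩, ⟨-, -, c⟩⟩ := hratio n x hx y hy _ rfl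
    exact ⟨a.trans hb', b.trans hb', c.trans hb'⟩

end
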